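/- arXiv:0908.3013 — 2 statements merged into one kernel-verified Lean document; each statement's English description precedes it below -/
import Mathlib

section
/- Define on V^{⊗n} (n ≥ 2) the invertible operators T_i := c_i for 1 ≤ i ≤ n−1 and T_n := id_V^{⊗(n−1)} ⊗ J. Then T_1,…,T_n satisfy the defining relations of the braid group of type C∨C_n: T_iT_j = T_jT_i for |i−j| ≥ 2, T_iT_{i+1}T_i = T_{i+1}T_iT_{i+1} for 1 ≤ i ≤ n−2, and T_{n−1}T_nT_{n−1}T_n = T_nT_{n−1}T_nT_{n−1}; hence they define a representation of the braid group of type C∨C_n on V^{⊗n}. -/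
/-!
All relations are reduced to small tensor powers. Writing `V^{⊗n}` as `V ⊗ V^{⊗(n-1)}`, an operator
that does not touch the first factor has the form `id_V ⊗ f`, and `f ↦ id_V ⊗ f` is multiplicative;
induction therefore strips leading factors until one of the operators acts on the first one.
What remains are three identities on `V ⊗ (V ⊗ W)` and `V ⊗ (V ⊗ (V ⊗ W))` for an arbitrary `W`:

* `c ⊗ id_W` commutes with `id_{V ⊗ V} ⊗ f` (`firstTwo_comm`);
* the braid relation, which is the given one on `V^{⊗3}` tensored with `W` (`firstTwo_braid`);
* the reflection equation, which is the given one on `V ⊗ V` tensored with `W`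
  (`firstTwo_reflection`).

Tensoring with `W` on the right is multiplicative, as is conjugation by the associators.
-/

open TensorProduct

/-- The iterated tensor power `V^{⊗n}` (with an extra harmless factor `K` at the end):
`TPow K V 0 = K` and `TPow K V (n+1) = V ⊗ TPow K V n`. -/
noncomputable def TPow (K : Type) [Field K] (V : Type) [AddCommGroup V] [Module K V] :
    ℕ → ModuleCat K
  | 0 => ModuleCat.of K K
  | n + 1 => ModuleCat.of K (TensorProduct K V (TPow K V n))

variable {K : Type} [Field K] {V : Type} [AddCommGroup V] [Module K V]

/-- The operator `c_{i+1}`: an endomorphism `c` of `V ⊗ V` applied in the (0-based) tensor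
factors `i, i+1` of `V^{⊗n}`, identity elsewhere (and identity if out of range). -/
noncomputable def opAt (c : Module.End K (TensorProduct K V V)) :
    (i n : ℕ) → Module.End K ↥(TPow K V n)
  | 0, n + 2 =>
      (show Module.End K (TensorProduct K V (TensorProduct K V ↥(TPow K V n))) from
        (TensorProduct.assoc K V V ↥(TPow K V n)).conj
          (LinearMap.rTensor ↥(TPow K V n) c))
  | i + 1, n + 1 => LinearMap.lTensor V (opAt c i n)
  | _, _ => LinearMap.id

/-- The operator `id^{⊗(n−1)} ⊗ J`: an endomorphism `J` of `V` applied in the last tensor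
factor of `V^{⊗n}`. -/
noncomputable def opLast (J : Module.End K V) : (n : ℕ) → Module.End K ↥(TPow K V n)
  | 0 => LinearMap.id
  | 1 => LinearMap.rTensor ↥(TPow K V 0) J
  | n + 2 => LinearMap.lTensor V (opLast J (n + 1))

/-- The operators `T_1, …, T_n` on `V^{⊗n}` (1-based `i`): `T_i := c_i` for `1 ≤ i ≤ n−1`
and `T_n := id^{⊗(n−1)} ⊗ J`. -/
noncomputable def Tbr (c : Module.End K (TensorProduct K V V)) (J : Module.End K V)
    (n : ℕ) (i : ℕ) : Module.End K ↥(TPow K V n) :=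
  if i = n then opLast J n else opAt c (i - 1) n

section LocalRelations

variable (W : Type) [AddCommGroup W] [Module K W]

/-- The operator `c ⊗ id_W`, transported to `V ⊗ (V ⊗ W)` by the associator. -/
noncomputable def firstTwo (c : Module.End K (V ⊗[K] V)) : Module.End K (V ⊗[K] (V ⊗[K] W)) :=
  (TensorProduct.assoc K V V W).conj (LinearMap.rTensor W c)

/-- Conjugation by a linear equivalence is multiplicative, stated for `*` on `Module.End`. -/
theorem conj_mul_end {A B : Type} [AddCommGroup A] [Module K A] [AddCommGroup B] [Module K B]
    (e : A ≃ₗ[K] B) (f g : Module.End K A) : e.conj (f * g) = e.conj f * e.conj g :=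
  LinearEquiv.conj_comp e g f

theorem lTensor_lTensor_eq_conj (f : Module.End K W) :
    LinearMap.lTensor V (LinearMap.lTensor V f) =
      (TensorProduct.assoc K V V W).conj (LinearMap.lTensor (V ⊗[K] V) f) := by
  ext x y z
  simp [LinearEquiv.conj_apply]

theorem firstTwo_comm (c : Module.End K (V ⊗[K] V)) (f : Module.End K W) :
    firstTwo W c * LinearMap.lTensor V (LinearMap.lTensor V f) =
      LinearMap.lTensor V (LinearMap.lTensor V f) * firstTwo W c := by
  rw [lTensor_lTensor_eq_conj, firstTwo, ← conj_mul_end, ← conj_mul_end]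
  congr 1
  exact (LinearMap.rTensor_comp_lTensor ..).trans (LinearMap.lTensor_comp_rTensor ..).symm

/-- The rebracketing `(V ⊗ (V ⊗ V)) ⊗ W ≃ V ⊗ (V ⊗ (V ⊗ W))`. -/
noncomputable def assocThree :
    ((V ⊗[K] (V ⊗[K] V)) ⊗[K] W) ≃ₗ[K] (V ⊗[K] (V ⊗[K] (V ⊗[K] W))) :=
  (TensorProduct.assoc K V (V ⊗[K] V) W).trans
    (LinearEquiv.lTensor V (TensorProduct.assoc K V V W))

theorem lTensor_firstTwo_eq_conj (c : Module.End K (V ⊗[K] V)) :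
    LinearMap.lTensor V (firstTwo W c) =
      (assocThree W).conj (LinearMap.rTensor W (LinearMap.lTensor V c)) := by
  ext x y z w
  simp [firstTwo, assocThree, LinearEquiv.conj_apply]

/-- The pentagon identity, read as a statement about `c` acting on the first two of the factors
`V ⊗ (V ⊗ (V ⊗ W))`. -/
theorem firstTwo_eq_conj (c : Module.End K (V ⊗[K] V)) :
    firstTwo (V ⊗[K] W) c =
      (assocThree W).conj
        (LinearMap.rTensor W ((TensorProduct.assoc K V V V).conj (LinearMap.rTensor V c))) := by
  -- Both sides apply `c` to `x ⊗ y` and then rebracket; the rebracketings agree on every `t`.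
  have key : ∀ (t : V ⊗[K] V) (z : V) (w : W),
      TensorProduct.assoc K V V (V ⊗[K] W) (t ⊗ₜ (z ⊗ₜ w)) =
        assocThree W (TensorProduct.assoc K V V V (t ⊗ₜ z) ⊗ₜ w) := by
    intro t z w
    induction t using TensorProduct.induction_on with
    | zero => simp
    | tmul a b => simp [assocThree]
    | add a b ha hb => simp only [TensorProduct.add_tmul, map_add, ha, hb]
  ext x y z w
  have hsymm : (assocThree W).symm (x ⊗ₜ[K] (y ⊗ₜ[K] (z ⊗ₜ[K] w))) =
      (x ⊗ₜ[K] (y ⊗ₜ[K] z)) ⊗ₜ[K] w := by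
    rw [LinearEquiv.symm_apply_eq]
    simp [assocThree]
  simp [firstTwo, LinearEquiv.conj_apply, hsymm, key]

theorem firstTwo_braid (c : Module.End K (V ⊗[K] V))
    (hbraid :
      ((TensorProduct.assoc K V V V).conj (LinearMap.rTensor V c)) * (LinearMap.lTensor V c)
          * ((TensorProduct.assoc K V V V).conj (LinearMap.rTensor V c))
        = (LinearMap.lTensor V c)
          * ((TensorProduct.assoc K V V V).conj (LinearMap.rTensor V c))
          * (LinearMap.lTensor V c)) :
    firstTwo (V ⊗[K] W) c * LinearMap.lTensor V (firstTwo W c) * firstTwo (V ⊗[K] W) c =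
      LinearMap.lTensor V (firstTwo W c) * firstTwo (V ⊗[K] W) c *
        LinearMap.lTensor V (firstTwo W c) := by
  rw [lTensor_firstTwo_eq_conj, firstTwo_eq_conj]
  simp only [← conj_mul_end, ← LinearMap.rTensor_mul, hbraid]

theorem lTensor_rTensor_eq_conj (J : Module.End K V) :
    LinearMap.lTensor V (LinearMap.rTensor W J) =
      (TensorProduct.assoc K V V W).conj (LinearMap.rTensor W (LinearMap.lTensor V J)) := by
  ext x y z
  simp [LinearEquiv.conj_apply]

theorem firstTwo_reflection (c : Module.End K (V ⊗[K] V)) (J : Module.End K V)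
    (hrefl : c * LinearMap.lTensor V J * c * LinearMap.lTensor V J
        = LinearMap.lTensor V J * c * LinearMap.lTensor V J * c) :
    firstTwo W c * LinearMap.lTensor V (LinearMap.rTensor W J) * firstTwo W c *
        LinearMap.lTensor V (LinearMap.rTensor W J) =
      LinearMap.lTensor V (LinearMap.rTensor W J) * firstTwo W c *
        LinearMap.lTensor V (LinearMap.rTensor W J) * firstTwo W c := by
  rw [lTensor_rTensor_eq_conj, firstTwo]
  simp only [← conj_mul_end, ← LinearMap.rTensor_mul, hrefl]

end LocalRelations

theorem opAt_comm (c : Module.End K (V ⊗[K] V)) (i j n : ℕ) (hij : i + 2 ≤ j) (hj : j + 2 ≤ n) :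
    opAt c i n * opAt c j n = opAt c j n * opAt c i n := by
  induction i generalizing j n with
  | zero =>
    obtain ⟨j, rfl⟩ := Nat.exists_eq_add_of_le' hij
    obtain ⟨n, rfl⟩ : ∃ m, n = m + 2 := ⟨n - 2, by omega⟩
    exact firstTwo_comm _ c (opAt c j n)
  | succ i ih =>
    obtain ⟨j, rfl⟩ : ∃ m, j = m + 1 := ⟨j - 1, by omega⟩
    obtain ⟨n, rfl⟩ : ∃ m, n = m + 1 := ⟨n - 1, by omega⟩
    have h := congrArg (LinearMap.lTensor V) (ih j n (by omega) (by omega))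
    rw [LinearMap.lTensor_mul, LinearMap.lTensor_mul] at h
    exact h

theorem opAt_opLast_comm (c : Module.End K (V ⊗[K] V)) (J : Module.End K V) (i n : ℕ)
    (hn : i + 3 ≤ n) : opAt c i n * opLast J n = opLast J n * opAt c i n := by
  induction i generalizing n with
  | zero =>
    obtain ⟨n, rfl⟩ : ∃ m, n = m + 3 := ⟨n - 3, by omega⟩
    exact firstTwo_comm _ c (opLast J (n + 1))
  | succ i ih =>
    obtain ⟨n, rfl⟩ : ∃ m, n = m + 2 := ⟨n - 2, by omega⟩
    have h := congrArg (LinearMap.lTensor V) (ih (n + 1) (by omega))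
    rw [LinearMap.lTensor_mul, LinearMap.lTensor_mul] at h
    exact h

theorem opAt_braid (c : Module.End K (V ⊗[K] V))
    (hbraid :
      ((TensorProduct.assoc K V V V).conj (LinearMap.rTensor V c)) * (LinearMap.lTensor V c)
          * ((TensorProduct.assoc K V V V).conj (LinearMap.rTensor V c))
        = (LinearMap.lTensor V c)
          * ((TensorProduct.assoc K V V V).conj (LinearMap.rTensor V c))
          * (LinearMap.lTensor V c))
    (i n : ℕ) (hn : i + 3 ≤ n) :
    opAt c i n * opAt c (i + 1) n * opAt c i n =
      opAt c (i + 1) n * opAt c i n * opAt c (i + 1) n := by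
  induction i generalizing n with
  | zero =>
    obtain ⟨n, rfl⟩ : ∃ m, n = m + 3 := ⟨n - 3, by omega⟩
    exact firstTwo_braid (TPow K V n) c hbraid
  | succ i ih =>
    obtain ⟨n, rfl⟩ : ∃ m, n = m + 1 := ⟨n - 1, by omega⟩
    have h := congrArg (LinearMap.lTensor V) (ih n (by omega))
    simp only [LinearMap.lTensor_mul] at h
    exact h

theorem opAt_opLast_reflection (c : Module.End K (V ⊗[K] V)) (J : Module.End K V)
    (hrefl : c * LinearMap.lTensor V J * c * LinearMap.lTensor V J
        = LinearMap.lTensor V J * c * LinearMap.lTensor V J * c) (n : ℕ) :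
    opAt c n (n + 2) * opLast J (n + 2) * opAt c n (n + 2) * opLast J (n + 2) =
      opLast J (n + 2) * opAt c n (n + 2) * opLast J (n + 2) * opAt c n (n + 2) := by
  induction n with
  | zero => exact firstTwo_reflection (TPow K V 0) c J hrefl
  | succ n ih =>
    have h := congrArg (LinearMap.lTensor V) ih
    simp only [LinearMap.lTensor_mul] at h
    exact h

/-- If `c` is an invertible solution of the braid relation on `V^{⊗3}` and `J`
is an invertible solution of the reflection equation `c(1⊗J)c(1⊗J) = (1⊗J)c(1⊗J)c` on `V⊗V`,
then `T_i := c_i` (`1 ≤ i ≤ n−1`) and `T_n := id^{⊗(n−1)} ⊗ J` satisfy the defining relations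
of the braid group of type `C∨Cₙ`; hence they define a representation of this braid group
on `V^{⊗n}`. -/
theorem braid_group_CCn_representation
    (K : Type) [Field K] (V : Type) [AddCommGroup V] [Module K V]
    (c : Module.End K (TensorProduct K V V)) (hc : IsUnit c)
    (J : Module.End K V) (hJ : IsUnit J)
    (hbraid :
      ((TensorProduct.assoc K V V V).conj (LinearMap.rTensor V c)) * (LinearMap.lTensor V c)
          * ((TensorProduct.assoc K V V V).conj (LinearMap.rTensor V c))
        = (LinearMap.lTensor V c)
          * ((TensorProduct.assoc K V V V).conj (LinearMap.rTensor V c))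
          * (LinearMap.lTensor V c))
    (hrefl : c * LinearMap.lTensor V J * c * LinearMap.lTensor V J
        = LinearMap.lTensor V J * c * LinearMap.lTensor V J * c)
    (n : ℕ) (hn : 2 ≤ n) :
    (∀ i j : ℕ, 1 ≤ i → i + 2 ≤ j → j ≤ n → Tbr c J n i * Tbr c J n j
        = Tbr c J n j * Tbr c J n i) ∧
    (∀ i : ℕ, 1 ≤ i → i + 2 ≤ n → Tbr c J n i * Tbr c J n (i + 1) * Tbr c J n i
        = Tbr c J n (i + 1) * Tbr c J n i * Tbr c J n (i + 1)) ∧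
    (Tbr c J n (n - 1) * Tbr c J n n * Tbr c J n (n - 1) * Tbr c J n n
        = Tbr c J n n * Tbr c J n (n - 1) * Tbr c J n n * Tbr c J n (n - 1)) := by
  refine ⟨fun i j hi hij hj => ?_, fun i hi hin => ?_, ?_⟩
  · rw [Tbr, if_neg (by omega), Tbr]
    split_ifs with h
    · exact opAt_opLast_comm c J _ _ (by omega)
    · exact opAt_comm c _ _ _ (by omega) (by omega)
  · obtain ⟨i, rfl⟩ : ∃ m, i = m + 1 := ⟨i - 1, by omega⟩
    rw [Tbr, if_neg (by omega), Tbr, if_neg (by omega)]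
    exact opAt_braid c hbraid i n (by omega)
  · obtain ⟨n, rfl⟩ : ∃ m, n = m + 2 := ⟨n - 2, by omega⟩
    rw [Tbr, if_neg (by omega), Tbr, if_pos rfl]
    exact opAt_opLast_reflection c J hrefl n
end

section
/- In the braid group of type C∨C_n, the elements T_{(i⋯j)} and P_i satisfy the following relations: (i) T_{(i⋯j)}T_{(k⋯l)} = T_{(k⋯l)}T_{(i⋯j)} whenever the integer intervals [i,j] and [k,l] (endpoints in either order) are disjoint; T_{(i⋯j)}T_{(k⋯l)} = T_{(k⋯l)}T_{(i+1⋯j+1)} whenever k > l, min(i,j) ≥ l and max(i,j) < k; and T_{(i⋯j)}T_{(k⋯l)} = T_{(k⋯l)}T_{(i−1⋯j−1)} whenever k < l, min(i,j) > k and max(i,j) ≤ l; (ii) T_iP_{i+1}T_i = P_i for 1 ≤ i ≤ n−1, and T_iP_j = P_jT_i for 1 ≤ i ≤ n−1 and j ∉ {i, i+1}; (iii) P_iP_j = P_jP_i for all 1 ≤ i, j ≤ n. -/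
/-!
Every relation reduces to a statement about a single generator `T_m`: if `a` intertwines each
letter of one segment with the matching letter of another, it intertwines the segments
(`SemiconjBy.tseg`).

* For (i), cutting a long segment around the letters `T_m, T_{m+1}` leaves one braid relation in
  the middle, with outer pieces commuting with the letter being moved. So a descending segment
  turns `T_m` into `T_{m+1}` (`tseg_desc_shift`), and an ascending one turns `T_{m+1}` into `T_m`
  (`tseg_asc_shift`).
* For (ii), `P_i = T_i P_{i+1} T_i` is immediate. If `j < i`, moving `T_i` through `P_j` turns it
  into `T_{i-1}` in the ascending half, which commutes with `T_n`, and the descending half turns it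
  back into `T_i`. If `j > i + 1`, all letters of `P_j` commute with `T_i`.
* For (iii), `P_i` also commutes with `T_n` for `i < n`: the case `i = n - 1` is the quartic
  relation, and descending induction uses `P_i = T_i P_{i+1} T_i`. Hence for `i < j` the element
  `P_i` commutes with all letters of `P_j`.
-/

/-- The element `T_{(i⋯j)}`: for `j > i > 0` it is `T_i T_{i+1} ⋯ T_{j−1}`, for `i > j > 0`
it is `T_{i−1} ⋯ T_{j+1} T_j`, and for `i = j` it is `1`. -/
def Tseg {G : Type*} [Monoid G] (t : ℕ → G) (i j : ℕ) : G :=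
  if i ≤ j then ((List.range (j - i)).map fun k => t (i + k)).prod
  else ((List.range (i - j)).map fun k => t (i - 1 - k)).prod

/-- The element `P_i := T_i ⋯ T_{n−1} T_n T_{n−1} ⋯ T_i = T_{(i⋯n)} T_n T_{(n⋯i)}`. -/
def Pel {G : Type*} [Monoid G] (t : ℕ → G) (n i : ℕ) : G :=
  Tseg t i n * t n * Tseg t n i

section Segments

variable {G : Type*} [Monoid G] (t : ℕ → G)

lemma tseg_self (i : ℕ) : Tseg t i i = 1 := by simp [Tseg]

lemma tseg_asc_succ {i j : ℕ} (h : i ≤ j) : Tseg t i (j + 1) = Tseg t i j * t j := by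
  have h1 : j + 1 - i = (j - i) + 1 := by omega
  have h2 : i + (j - i) = j := by omega
  simp [Tseg, h, Nat.le_succ_of_le h, h1, List.range_succ, h2]

lemma tseg_desc_succ {i j : ℕ} (h : i ≤ j) : Tseg t (j + 1) i = t j * Tseg t j i := by
  have h1 : j + 1 - i = (j - i) + 1 := by omega
  have h0 : ¬ j + 1 ≤ i := by omega
  rcases h.eq_or_lt with rfl | h
  · simp [Tseg]
  · have h2 : ¬ j ≤ i := by omega
    rw [Tseg, Tseg, if_neg h0, if_neg h2, h1, List.range_succ_eq_map]
    simp only [List.map_cons, List.map_map, List.prod_cons]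
    congr 2
    refine List.map_congr_left fun k _ => ?_
    simp only [Function.comp]
    congr 1
    omega

lemma tseg_asc_mul {i m j : ℕ} (h : i ≤ m) (h' : m ≤ j) :
    Tseg t i m * Tseg t m j = Tseg t i j := by
  induction j, h' using Nat.le_induction with
  | base => simp [tseg_self]
  | succ j hj ih => rw [tseg_asc_succ t hj, tseg_asc_succ t (h.trans hj), ← mul_assoc, ih]

lemma tseg_desc_mul {i m j : ℕ} (h : i ≤ m) (h' : m ≤ j) :
    Tseg t j m * Tseg t m i = Tseg t j i := by
  induction j, h' using Nat.le_induction with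
  | base => simp [tseg_self]
  | succ j hj ih => rw [tseg_desc_succ t hj, tseg_desc_succ t (h.trans hj), mul_assoc, ih]

lemma tseg_asc_one (i : ℕ) : Tseg t i (i + 1) = t i := by
  simp [tseg_asc_succ, tseg_self]

lemma tseg_desc_one (i : ℕ) : Tseg t (i + 1) i = t i := by
  simp [tseg_desc_succ, tseg_self]

lemma tseg_shift (i j : ℕ) : Tseg (fun m => t (m + 1)) i j = Tseg t (i + 1) (j + 1) := by
  rcases le_total i j with h | h
  · induction j, h using Nat.le_induction with
    | base => simp [tseg_self]
    | succ j hj ih => rw [tseg_asc_succ _ hj, tseg_asc_succ t (by omega), ih]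
  · induction i, h using Nat.le_induction with
    | base => simp [tseg_self]
    | succ i hi ih => rw [tseg_desc_succ _ hi, tseg_desc_succ t (by omega), ih]

/-- An element intertwining the letters of two segments intertwines the segments. -/
lemma SemiconjBy.tseg {s t : ℕ → G} {a : G} {i j : ℕ}
    (h : ∀ m, min i j ≤ m → m < max i j → SemiconjBy a (s m) (t m)) :
    SemiconjBy a (Tseg s i j) (Tseg t i j) := by
  rcases le_total i j with hij | hij
  · induction j, hij using Nat.le_induction with
    | base => simp [tseg_self]
    | succ j hj ih =>
      rw [tseg_asc_succ _ hj, tseg_asc_succ _ hj]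
      exact (ih fun m h1 h2 => h m (by omega) (by omega)).mul_right (h j (by omega) (by omega))
  · induction i, hij using Nat.le_induction with
    | base => simp [tseg_self]
    | succ i hi ih =>
      rw [tseg_desc_succ _ hi, tseg_desc_succ _ hi]
      exact (h i (by omega) (by omega)).mul_right (ih fun m h1 h2 => h m (by omega) (by omega))

lemma Commute.tseg {a : G} {i j : ℕ}
    (h : ∀ m, min i j ≤ m → m < max i j → Commute a (t m)) : Commute a (Tseg t i j) :=
  SemiconjBy.tseg h

lemma pel_succ {n i : ℕ} (h : i < n) : t i * Pel t n (i + 1) * t i = Pel t n i := by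
  rw [Pel, Pel, ← tseg_asc_mul t (Nat.le_succ i) h, ← tseg_desc_mul t (Nat.le_succ i) h,
    tseg_asc_one, tseg_desc_one]
  simp only [mul_assoc]

lemma Commute.pel {a : G} {n i : ℕ} (hi : i ≤ n)
    (h : ∀ m, i ≤ m → m ≤ n → Commute a (t m)) : Commute a (Pel t n i) :=
  ((Commute.tseg t fun m h1 h2 => h m (by omega) (by omega)).mul_right (h n hi le_rfl)).mul_right
    (Commute.tseg t fun m h1 h2 => h m (by omega) (by omega))

end Segments

section Braid

variable {G : Type*} [Monoid G] {n : ℕ} {t : ℕ → G}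

lemma commute_letters
    (hcomm : ∀ i j : ℕ, 1 ≤ i → i + 2 ≤ j → j ≤ n → t i * t j = t j * t i)
    {i j : ℕ} (hi : 1 ≤ i) (hin : i ≤ n) (hj : 1 ≤ j) (hjn : j ≤ n)
    (h : i + 2 ≤ j ∨ j + 2 ≤ i) : Commute (t i) (t j) := by
  rcases h with h | h
  · exact hcomm i j hi h hjn
  · exact (hcomm j i hj h hin).symm

/-- `T_m T_{(k⋯l)} = T_{(k⋯l)} T_{m+1}` for a descending segment with `l ≤ m ≤ k - 2`. -/
lemma tseg_desc_shift
    (hcomm : ∀ i j : ℕ, 1 ≤ i → i + 2 ≤ j → j ≤ n → t i * t j = t j * t i)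
    (hbraid : ∀ i : ℕ, 1 ≤ i → i + 2 ≤ n →
      t i * t (i + 1) * t i = t (i + 1) * t i * t (i + 1))
    {k l m : ℕ} (hl : 1 ≤ l) (hk : k ≤ n) (hlm : l ≤ m) (hmk : m + 2 ≤ k) :
    SemiconjBy (Tseg t k l) (t (m + 1)) (t m) := by
  -- `T_{m+1}` commutes with the right piece, the braid relation turns it into `T_m`, and `T_m`
  -- commutes with the left piece
  have hsplit : Tseg t k l = Tseg t k (m + 2) * (t (m + 1) * t m) * Tseg t m l := by
    rw [← tseg_desc_mul t hlm (by omega : m ≤ k),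
      ← tseg_desc_mul t (by omega : m ≤ m + 2) hmk, tseg_desc_succ t (by omega : m ≤ m + 1),
      tseg_desc_one]
  have h1 : SemiconjBy (Tseg t m l) (t (m + 1)) (t (m + 1)) :=
    (Commute.tseg t fun p h1 h2 => commute_letters hcomm (by omega) (by omega) (by omega)
      (by omega) (by omega)).symm
  have h2 : SemiconjBy (t (m + 1) * t m) (t (m + 1)) (t m) := by
    rw [SemiconjBy, ← mul_assoc, ← hbraid m (by omega) (by omega)]
  have h3 : SemiconjBy (Tseg t k (m + 2)) (t m) (t m) :=
    (Commute.tseg t fun p h1 h2 => commute_letters hcomm (by omega) (by omega) (by omega)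
      (by omega) (by omega)).symm
  rw [hsplit]
  exact (h3.mul_left h2).mul_left h1

/-- `T_{m+1} T_{(k⋯l)} = T_{(k⋯l)} T_m` for an ascending segment with `k ≤ m ≤ l - 2`. -/
lemma tseg_asc_shift
    (hcomm : ∀ i j : ℕ, 1 ≤ i → i + 2 ≤ j → j ≤ n → t i * t j = t j * t i)
    (hbraid : ∀ i : ℕ, 1 ≤ i → i + 2 ≤ n →
      t i * t (i + 1) * t i = t (i + 1) * t i * t (i + 1))
    {k l m : ℕ} (hk : 1 ≤ k) (hl : l ≤ n) (hkm : k ≤ m) (hml : m + 2 ≤ l) :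
    SemiconjBy (Tseg t k l) (t m) (t (m + 1)) := by
  have hsplit : Tseg t k l = Tseg t k m * (t m * t (m + 1)) * Tseg t (m + 2) l := by
    rw [← tseg_asc_mul t (by omega : k ≤ m + 2) hml,
      ← tseg_asc_mul t hkm (by omega : m ≤ m + 2), tseg_asc_succ t (by omega : m ≤ m + 1),
      tseg_asc_one]
  have h1 : SemiconjBy (Tseg t (m + 2) l) (t m) (t m) :=
    (Commute.tseg t fun p h1 h2 => commute_letters hcomm (by omega) (by omega) (by omega)
      (by omega) (by omega)).symm
  have h2 : SemiconjBy (t m * t (m + 1)) (t m) (t (m + 1)) := by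
    rw [SemiconjBy, hbraid m (by omega) (by omega), mul_assoc]
  have h3 : SemiconjBy (Tseg t k m) (t (m + 1)) (t (m + 1)) :=
    (Commute.tseg t fun p h1 h2 => commute_letters hcomm (by omega) (by omega) (by omega)
      (by omega) (by omega)).symm
  rw [hsplit]
  exact (h3.mul_left h2).mul_left h1

lemma commute_pel
    (hcomm : ∀ i j : ℕ, 1 ≤ i → i + 2 ≤ j → j ≤ n → t i * t j = t j * t i)
    (hbraid : ∀ i : ℕ, 1 ≤ i → i + 2 ≤ n →
      t i * t (i + 1) * t i = t (i + 1) * t i * t (i + 1))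
    {i j : ℕ} (hi : 1 ≤ i) (hin : i < n) (hj : 1 ≤ j) (hjn : j ≤ n)
    (h1 : j ≠ i) (h2 : j ≠ i + 1) : Commute (t i) (Pel t n j) := by
  rcases lt_or_gt_of_ne h1 with h | h
  · obtain ⟨m, rfl⟩ : ∃ m, i = m + 1 := ⟨i - 1, by omega⟩
    have ha := tseg_asc_shift hcomm hbraid hj le_rfl (by omega : j ≤ m) (by omega)
    have hd := tseg_desc_shift hcomm hbraid hj le_rfl (by omega : j ≤ m) (by omega)
    have hc : SemiconjBy (t n) (t m) (t m) :=
      commute_letters hcomm (by omega) le_rfl (by omega) (by omega) (by omega)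
    exact Commute.symm ((ha.mul_left hc).mul_left hd)
  · exact Commute.pel t hjn fun m h3 h4 =>
      commute_letters hcomm hi hin.le (by omega) h4 (by omega)

end Braid

lemma commute_pel_last {G : Type*} [Monoid G] {n : ℕ} {t : ℕ → G}
    (hcomm : ∀ i j : ℕ, 1 ≤ i → i + 2 ≤ j → j ≤ n → t i * t j = t j * t i)
    (hquartic : t (n - 1) * t n * t (n - 1) * t n = t n * t (n - 1) * t n * t (n - 1))
    {i : ℕ} (hi : 1 ≤ i) (hin : i < n) : Commute (t n) (Pel t n i) := by
  obtain ⟨N, rfl⟩ : ∃ N, n = N + 1 := ⟨n - 1, by omega⟩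
  rw [Nat.add_sub_cancel] at hquartic
  have hiN : i ≤ N := by omega
  induction hiN using Nat.decreasingInduction with
  | self =>
    rw [← pel_succ t (Nat.lt_succ_self N), Pel, tseg_self, one_mul, mul_one]
    simp only [Commute, SemiconjBy, ← mul_assoc]
    exact hquartic.symm
  | of_succ i _ ih =>
    have hc : Commute (t (N + 1)) (t i) := (hcomm i (N + 1) hi (by omega) le_rfl).symm
    rw [← pel_succ t hin]
    exact (hc.mul_right (ih (by omega) (by omega))).mul_right hc

/-- In the braid group of type `C∨Cₙ` — i.e. for any group `G` and elements
`T_1, …, T_n` satisfying its defining relations — the elements `T_{(i⋯j)}` and `P_i` satisfy: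
(i) the interval commutation/shift relations, (ii) `T_iP_{i+1}T_i = P_i` and `T_iP_j = P_jT_i`
for `j ∉ {i, i+1}`, and (iii) `P_iP_j = P_jP_i`. -/
theorem Tseg_Pel_relations {G : Type*} [Group G] (n : ℕ) (hn : 2 ≤ n) (t : ℕ → G)
    (hcomm : ∀ i j : ℕ, 1 ≤ i → i + 2 ≤ j → j ≤ n → t i * t j = t j * t i)
    (hbraid : ∀ i : ℕ, 1 ≤ i → i + 2 ≤ n →
      t i * t (i + 1) * t i = t (i + 1) * t i * t (i + 1))
    (hquartic : t (n - 1) * t n * t (n - 1) * t n = t n * t (n - 1) * t n * t (n - 1)) :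
    -- (i) disjoint intervals commute
    (∀ i j k l : ℕ, 1 ≤ i → i ≤ n → 1 ≤ j → j ≤ n → 1 ≤ k → k ≤ n → 1 ≤ l → l ≤ n →
        (max i j < min k l ∨ max k l < min i j) →
        Tseg t i j * Tseg t k l = Tseg t k l * Tseg t i j) ∧
    -- (i) shift up: k > l, min(i,j) ≥ l, max(i,j) < k
    (∀ i j k l : ℕ, 1 ≤ i → i ≤ n → 1 ≤ j → j ≤ n → 1 ≤ k → k ≤ n → 1 ≤ l → l ≤ n →
        l < k → l ≤ min i j → max i j < k →
        Tseg t i j * Tseg t k l = Tseg t k l * Tseg t (i + 1) (j + 1)) ∧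
    -- (i) shift down: k < l, min(i,j) > k, max(i,j) ≤ l
    (∀ i j k l : ℕ, 1 ≤ i → i ≤ n → 1 ≤ j → j ≤ n → 1 ≤ k → k ≤ n → 1 ≤ l → l ≤ n →
        k < l → k < min i j → max i j ≤ l →
        Tseg t i j * Tseg t k l = Tseg t k l * Tseg t (i - 1) (j - 1)) ∧
    -- (ii)
    (∀ i : ℕ, 1 ≤ i → i ≤ n - 1 → t i * Pel t n (i + 1) * t i = Pel t n i) ∧
    (∀ i j : ℕ, 1 ≤ i → i ≤ n - 1 → 1 ≤ j → j ≤ n → j ≠ i → j ≠ i + 1 →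
        t i * Pel t n j = Pel t n j * t i) ∧
    -- (iii)
    (∀ i j : ℕ, 1 ≤ i → i ≤ n → 1 ≤ j → j ≤ n →
        Pel t n i * Pel t n j = Pel t n j * Pel t n i) := by
  have hpel : ∀ i j : ℕ, 1 ≤ i → i < j → j ≤ n → Commute (Pel t n i) (Pel t n j) := by
    intro i j hi hij hj
    refine Commute.pel t hj fun m h1 h2 => Commute.symm ?_
    rcases h2.eq_or_lt with rfl | h2
    · exact commute_pel_last hcomm hquartic hi (by omega)
    · exact commute_pel hcomm hbraid (by omega) h2 hi (by omega) (by omega) (by omega)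
  refine ⟨?_, ?_, ?_, ?_, ?_, ?_⟩
  · intro i j k l _ _ _ _ _ _ _ _ h
    exact Commute.tseg t fun m h1 h2 => Commute.symm <| Commute.tseg t fun p h3 h4 =>
      commute_letters hcomm (by omega) (by omega) (by omega) (by omega) (by omega)
  · intro i j k l _ _ _ _ _ _ hl _ _ h1 h2
    rw [← tseg_shift]
    exact (SemiconjBy.tseg fun m h3 h4 =>
      tseg_desc_shift hcomm hbraid hl (by omega) (by omega) (by omega)).eq.symm
  · intro i j k l hi _ hj _ hk _ _ _ _ h1 h2
    obtain ⟨i, rfl⟩ : ∃ i', i = i' + 1 := ⟨i - 1, by omega⟩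
    obtain ⟨j, rfl⟩ : ∃ j', j = j' + 1 := ⟨j - 1, by omega⟩
    rw [← tseg_shift, Nat.add_sub_cancel, Nat.add_sub_cancel]
    exact (SemiconjBy.tseg fun m h3 h4 =>
      tseg_asc_shift hcomm hbraid hk (by omega) (by omega) (by omega)).eq.symm
  · intro i _ h
    exact pel_succ t (by omega)
  · intro i j hi hin hj hjn h1 h2
    exact commute_pel hcomm hbraid hi (by omega) hj hjn h1 h2
  · intro i j hi hin hj hjn
    rcases lt_trichotomy i j with h | rfl | h
    · exact hpel i j hi h hjn
    · rfl
    · exact (hpel j i hj h hin).symm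
end
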